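/- In the noncommutative polynomial ring ℍ[x,y] over the quaternions, the polynomial p = XY − YX is not the product of two linear polynomials: there do not exist quaternions a, b, c, A, B, C such that X·Y − Y·X = ((a⊗1)·X + (b⊗1)·Y + (c⊗1)) · ((A⊗1)·X + (B⊗1)·Y + (C⊗1)). -/

import Mathlib

open TensorProduct

set_option synthInstance.maxHeartbeats 1000000
set_option maxHeartbeats 1000000

/-- The noncommutative polynomial ring ℍ[x,y] over the quaternions. -/
noncomputable abbrev QuatPoly : Type :=
  Quaternion ℝ ⊗[ℝ] FreeAlgebra ℝ (Fin 2)

/-- The variable X. -/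
noncomputable def QuatPoly.X : QuatPoly := (1 : Quaternion ℝ) ⊗ₜ[ℝ] FreeAlgebra.ι ℝ (0 : Fin 2)

/-- The variable Y. -/
noncomputable def QuatPoly.Y : QuatPoly := (1 : Quaternion ℝ) ⊗ₜ[ℝ] FreeAlgebra.ι ℝ (1 : Fin 2)

/-- Embedding of a quaternion coefficient. -/
noncomputable def QuatPoly.coeff (q : Quaternion ℝ) : QuatPoly :=
  q ⊗ₜ[ℝ] (1 : FreeAlgebra ℝ (Fin 2))

/-- Upper triangular matrices used to extract quadratic coefficients. -/
noncomputable def auxM (s t : ℝ) : Matrix (Fin 3) (Fin 3) ℝ := !![0, s, 0; 0, 0, t; 0, 0, 0]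

/-- The functional reading off the top right entry of the evaluation. -/
noncomputable def auxPhi (s t u v : ℝ) : FreeAlgebra ℝ (Fin 2) →ₗ[ℝ] ℝ :=
  (Matrix.entryLinearMap ℝ ℝ (0 : Fin 3) (2 : Fin 3)) ∘ₗ
    (FreeAlgebra.lift ℝ ![auxM s t, auxM u v]).toLinearMap

/-- Its extension to quaternionic coefficients. -/
noncomputable def auxPsi (s t u v : ℝ) : QuatPoly →ₗ[ℝ] Quaternion ℝ :=
  (TensorProduct.rid ℝ (Quaternion ℝ)).toLinearMap ∘ₗ
    (LinearMap.lTensor (Quaternion ℝ) (auxPhi s t u v))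

theorem auxPsi_tmul (s t u v : ℝ) (q : Quaternion ℝ) (w : FreeAlgebra ℝ (Fin 2)) :
    auxPsi s t u v (q ⊗ₜ w) = auxPhi s t u v w • q := by
  simp [auxPsi]

theorem aux_expand {R : Type*} [Ring R] (p q r P Q S : R) :
    (p + q + r) * (P + Q + S) =
      p * P + p * Q + p * S + (q * P + q * Q + q * S) + (r * P + r * Q + r * S) := by
  noncomm_ring

theorem aux_expand' (p q r P Q S : QuatPoly) :
    (p + q + r) * (P + Q + S) =
      p * P + p * Q + p * S + (q * P + q * Q + q * S) + (r * P + r * Q + r * S) :=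
  aux_expand p q r P Q S

theorem aux_key (a b c A B C : Quaternion ℝ)
    (h : QuatPoly.X * QuatPoly.Y - QuatPoly.Y * QuatPoly.X =
        (QuatPoly.coeff a * QuatPoly.X + QuatPoly.coeff b * QuatPoly.Y + QuatPoly.coeff c) *
        (QuatPoly.coeff A * QuatPoly.X + QuatPoly.coeff B * QuatPoly.Y + QuatPoly.coeff C))
    (s t u v : ℝ) :
    (s * v) • (1 : Quaternion ℝ) - (u * t) • (1 : Quaternion ℝ) =
      (s * t) • (a * A) + (s * v) • (a * B) + (u * t) • (b * A) + (u * v) • (b * B) := by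
  have h1 : auxPhi s t u v 1 = 0 := by simp [auxPhi]
  have hx (i : Fin 2) : auxPhi s t u v (FreeAlgebra.ι ℝ i) = 0 := by
    fin_cases i <;> simp [auxPhi, auxM]
  have hxx (i j : Fin 2) : auxPhi s t u v (FreeAlgebra.ι ℝ i * FreeAlgebra.ι ℝ j) =
      (![s, u] i) * (![t, v] j) := by
    fin_cases i <;> fin_cases j <;> simp [auxPhi, auxM]
  have h2 := congrArg (auxPsi s t u v) h
  simp only [QuatPoly.X, QuatPoly.Y, QuatPoly.coeff, aux_expand',
    Algebra.TensorProduct.tmul_mul_tmul, map_add, map_sub, auxPsi_tmul, mul_one, one_mul,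
    h1, hx, hxx, zero_smul, add_zero] at h2
  simp only [Matrix.cons_val_zero, Matrix.cons_val_one] at h2
  rw [h2]
  abel

theorem stmt_12 :
    ¬ ∃ a b c A B C : Quaternion ℝ,
      QuatPoly.X * QuatPoly.Y - QuatPoly.Y * QuatPoly.X =
        (QuatPoly.coeff a * QuatPoly.X + QuatPoly.coeff b * QuatPoly.Y + QuatPoly.coeff c) *
        (QuatPoly.coeff A * QuatPoly.X + QuatPoly.coeff B * QuatPoly.Y + QuatPoly.coeff C) := by
  rintro ⟨a, b, c, A, B, C, h⟩
  have k := aux_key a b c A B C h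
  have k1 : a * A = 0 := by simpa using (k 1 1 0 0).symm
  have k2 : a * B = 1 := by simpa using (k 1 0 0 1).symm
  have k3 : b * A = -1 := by simpa using (k 0 1 1 0).symm
  rcases mul_eq_zero.mp k1 with h0 | h0
  · simp [h0] at k2
  · simp [h0] at k3
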